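/- (Theorem 2) The supervisory control system S/G is IS-attackable — i.e., there exists an attacker A and an observation ασ ∈ P(L(S_A/G)) with σ ∈ Σ_o such that A is stealthy along α and E^I_{S_A/G}(ασ) ⊆ X_sec — if and only if there exists a single attack structure m of the simplified AAS M^s such that the induced attack strategy A_m is IS-detectable. -/

import Mathlib

open scoped Classical

namespace DES

variable {X E Z : Type*}

/-- Run of a partial automaton on a string of events. -/
def runStr (δ : X → E → Option X) : X → List E → Option X
  | x, [] => some x
  | x, σ :: s => (δ x σ).bind fun y => runStr δ y s

/-- Open-loop language generated from a state. -/
def LangFrom (δ : X → E → Option X) (x0 : X) : Set (List E) :=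
  {s | (runStr δ x0 s).isSome}

/-- Open-loop language of the plant. -/
def Lang (δ : X → E → Option X) (X0 : Set X) : Set (List E) :=
  {s | ∃ x0 ∈ X0, s ∈ LangFrom δ x0}

/-- Natural projection erasing unobservable events. -/
noncomputable def proj (Eobs : Set E) (s : List E) : List E :=
  s.filter fun e => decide (e ∈ Eobs)

/-- Closed-loop language of `S/G` from initial state `x0`. -/
inductive CLLang (δ : X → E → Option X) (Eobs : Set E) (S : List E → Set E) (x0 : X) :
    List E → Prop
  | nil : CLLang δ Eobs S x0 []
  | snoc (s : List E) (σ : E) : CLLang δ Eobs S x0 s →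
      (runStr δ x0 (s ++ [σ])).isSome → σ ∈ S (proj Eobs s) → CLLang δ Eobs S x0 (s ++ [σ])

/-- Closed-loop language of `S/G`. -/
def CLLangAll (δ : X → E → Option X) (Eobs : Set E) (S : List E → Set E) (X0 : Set X) :
    Set (List E) := {s | ∃ x0 ∈ X0, CLLang δ Eobs S x0 s}

/-- Projection of a language. -/
def projSet (Eobs : Set E) (L : Set (List E)) : Set (List E) := proj Eobs '' L

/-- Current-state estimate of the closed-loop system. -/
def ECest (δ : X → E → Option X) (Eobs : Set E) (S : List E → Set E) (X0 : Set X)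
    (α : List E) : Set X :=
  {x | ∃ x0 ∈ X0, ∃ s, CLLang δ Eobs S x0 s ∧ proj Eobs s = α ∧ runStr δ x0 s = some x}

/-- Initial-state estimate of the closed-loop system. -/
def EIest (δ : X → E → Option X) (Eobs : Set E) (S : List E → Set E) (X0 : Set X)
    (α : List E) : Set X :=
  {x0 | x0 ∈ X0 ∧ ∃ s, CLLang δ Eobs S x0 s ∧ proj Eobs s = α}

/-- Unobservable reach of `q` under control decision `γ`. -/
def URset (δ : X → E → Option X) (Euo γ : Set E) (q : Set X) : Set X :=
  {y | ∃ x ∈ q, ∃ s : List E, (∀ e ∈ s, e ∈ Euo ∩ γ) ∧ runStr δ x s = some y}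

/-- Observable reach of `q` upon occurrence of `σ`. -/
def NXset (δ : X → E → Option X) (σ : E) (q : Set X) : Set X :=
  {y | ∃ x ∈ q, δ x σ = some y}

/-- Events that can be observed from `q` under control decision `γ`. -/
def Oset (δ : X → E → Option X) (Eobs Euo : Set E) (q : Set X) (γ : Set E) : Set E :=
  {σ | σ ∈ Eobs ∩ γ ∧ ∃ x ∈ q, ∃ w : List E, (∀ e ∈ w, e ∈ Euo ∩ γ) ∧
      (runStr δ x (w ++ [σ])).isSome}

/-- Transition function of the augmented system `~G`. -/
def augDelta (δ : X → E → Option X) : X × X → E → Option (X × X) :=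
  fun p σ => (δ p.2 σ).map fun y => (p.1, y)

/-- Initial states of the augmented system. -/
def augX0 (X0 : Set X) : Set (X × X) := {p | p.1 ∈ X0 ∧ p.2 = p.1}

/-- First components of a set of augmented states. -/
def Iset (qt : Set (X × X)) : Set X := Prod.fst '' qt

/-- Active events of the supervisor automaton `H` at state `z`. -/
def ΔH (ξ : Z → E → Option Z) (z : Z) : Set E := {σ | (ξ z σ).isSome}

/-- Active events at `some z`, and `∅` at the attack-detected state `z_att = none`. -/
def ΔHopt (ξ : Z → E → Option Z) : Option Z → Set E
  | some z => ΔH ξ z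
  | none => ∅

/-- `H = (Z, Σ, ξ, z₀)` realizes supervisor `S`. -/
def Realizes (ξ : Z → E → Option Z) (z0 : Z) (δ : X → E → Option X)
    (Eobs : Set E) (S : List E → Set E) (X0 : Set X) : Prop :=
  (∀ z σ z', ξ z σ = some z' → z' ≠ z → σ ∈ Eobs) ∧
  (∀ s ∈ CLLangAll δ Eobs S X0, ∃ z, runStr ξ z0 s = some z ∧ ΔH ξ z = S (proj Eobs s))

/-- Product automaton `G × H`. -/
def prodDelta (δ : X → E → Option X) (ξ : Z → E → Option Z) :
    X × Z → E → Option (X × Z) :=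
  fun p σ => (δ p.1 σ).bind fun x' => (ξ p.2 σ).map fun z' => (x', z')

/-- Environment states of the AAS: `(q, qt, z)` with `z = none` encoding `z_att`. -/
abbrev EnvState (X Z : Type*) := Set X × Set (X × X) × Option Z

/-- Attack states of the AAS: `(q, qt, z, σ)`. -/
abbrev AtkState (X Z E : Type*) := Set X × Set (X × X) × Z × E

/-- States of the AAS. -/
abbrev MState (X Z E : Type*) := EnvState X Z ⊕ AtkState X Z E

/-- Events of the AAS: `Sum.inl σ` is a genuine event, `Sum.inr (some σ)` is `σ̂`,
and `Sum.inr none` is `ε̂`. -/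
abbrev MEvent (E : Type*) := E ⊕ Option E

/-- Action space `V(σ)` of the attacker. -/
def Vmap (Ev : Set E) (σ : E) : Set (Option E) :=
  if σ ∈ Ev then {a | ∃ σ', a = some σ' ∧ σ' ∈ Ev} ∪ {none} else {some σ}

/-- Transition function of the All Attack Structure. -/
noncomputable def AASf (δ : X → E → Option X) (Eobs Euo Ev : Set E)
    (ξ : Z → E → Option Z) : MState X Z E → MEvent E → Option (MState X Z E)
  | Sum.inl (q, qt, some z), Sum.inl σ =>
      if σ ∈ Oset (augDelta δ) Eobs Euo qt (ΔH ξ z) then some (Sum.inr (q, qt, z, σ))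
      else none
  | Sum.inr (q, qt, z, σ), Sum.inr a =>
      if a ∈ Vmap Ev σ then
        let q' : Set X := match a with
          | some σa => NXset δ σa (URset δ Euo (ΔH ξ z) q)
          | none => URset δ Euo (ΔH ξ z) q
        let qt' : Set (X × X) := NXset (augDelta δ) σ (URset (augDelta δ) Euo (ΔH ξ z) qt)
        if q'.Nonempty then
          match a with
          | some σa => (ξ z σa).map fun z' => Sum.inl (q', qt', some z')
          | none => some (Sum.inl (q', qt', some z))
        else some (Sum.inl (q', qt', (none : Option Z)))
      else none
  | _, _ => none

/-- Initial state of the AAS. -/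
def AASq0 (X0 : Set X) (z0 : Z) : MState X Z E := Sum.inl (X0, augX0 X0, some z0)

/-- Actual observation of an extended string. -/
def obs : List (MEvent E) → List E :=
  List.filterMap fun e => match e with | Sum.inl σ => some σ | Sum.inr _ => none

/-- Tampered (doctored) observation of an extended string. -/
def tam : List (MEvent E) → List E :=
  List.filterMap fun e => match e with | Sum.inl _ => none | Sum.inr a => a

/-- `h` is an extended string of the structure with transition function `f`
ending at an environment state. -/
def LeM (f : MState X Z E → MEvent E → Option (MState X Z E)) (q0 : MState X Z E)
    (h : List (MEvent E)) : Prop :=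
  ∃ qe : EnvState X Z, runStr f q0 h = some (Sum.inl qe)

/-- `A` is an attacker (with `none` encoding `ε`). -/
def IsAttacker (δ : X → E → Option X) (Eobs Ev : Set E) (X0 : Set X)
    (A : List E → Option E) : Prop :=
  A [] = none ∧
  ∀ α σ, (α ++ [σ]) ∈ projSet Eobs (Lang δ X0) →
    (σ ∉ Ev → A (α ++ [σ]) = some σ) ∧ (σ ∈ Ev → A (α ++ [σ]) ∈ Vmap Ev σ)

/-- The string-modification map `g_A` induced by attacker `A`. -/
def gA (A : List E → Option E) (α : List E) : List E :=
  (List.range α.length).filterMap fun i => A (α.take (i + 1))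

/-- The extended string `α_A` determined by attacker `A` and observation `α`
(the first argument is the accumulated prefix). -/
def extStr (A : List E → Option E) : List E → List E → List (MEvent E)
  | _, [] => []
  | pre, σ :: rest =>
      Sum.inl σ :: Sum.inr (A (pre ++ [σ])) :: extStr A (pre ++ [σ]) rest

/-- Positive detected environment state. -/
def PosDet (Xsec : Set X) (qe : EnvState X Z) : Prop := Iset qe.2.1 ⊆ Xsec

/-- Negative detected environment state. -/
def NegDet (Xsec : Set X) (qe : EnvState X Z) : Prop := Iset qe.2.1 ∩ Xsec = ∅

/-- Undetectable environment state. -/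
def Undet (δ : X → E → Option X) (Euo : Set E) (ξ : Z → E → Option Z)
    (Xsec : Set X) (qe : EnvState X Z) : Prop :=
  (Iset qe.2.1 ∩ Xsec).Nonempty ∧
  ∀ p ∈ URset (augDelta δ) Euo (ΔHopt ξ qe.2.2) qe.2.1, p.1 ∈ Xsec →
    ∃ p' ∈ URset (augDelta δ) Euo (ΔHopt ξ qe.2.2) qe.2.1, p'.2 = p.2 ∧ p'.1 ∉ Xsec

/-- Transition function of the simplified AAS: all outgoing transitions from
detected and undetectable environment states are removed. -/
noncomputable def SAASf (δ : X → E → Option X) (Eobs Euo Ev : Set E)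
    (ξ : Z → E → Option Z) (Xsec : Set X) :
    MState X Z E → MEvent E → Option (MState X Z E) := fun st e =>
  match st with
  | Sum.inl qe =>
      if PosDet Xsec qe ∨ NegDet Xsec qe ∨ Undet δ Euo ξ Xsec qe then none
      else AASf δ Eobs Euo Ev ξ st e
  | Sum.inr _ => AASf δ Eobs Euo Ev ξ st e

/-- Reachability in a structure over AAS states. -/
def ReachableFrom (f : MState X Z E → MEvent E → Option (MState X Z E))
    (st st' : MState X Z E) : Prop := ∃ t, runStr f st t = some st'

/-- `fm` is (the transition function of) a single attack structure of the
simplified AAS. -/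
def IsSAS (δ : X → E → Option X) (Eobs Euo Ev : Set E) (ξ : Z → E → Option Z)
    (z0 : Z) (X0 Xsec : Set X)
    (fm : MState X Z E → MEvent E → Option (MState X Z E)) : Prop :=
  (∀ st e st', fm st e = some st' → SAASf δ Eobs Euo Ev ξ Xsec st e = some st') ∧
  (∀ qa : AtkState X Z E, ReachableFrom fm (AASq0 X0 z0) (Sum.inr qa) →
      ∃! e, (fm (Sum.inr qa) e).isSome = true) ∧
  (∀ qe : EnvState X Z, ReachableFrom fm (AASq0 X0 z0) (Sum.inl qe) →
      ∀ e, fm (Sum.inl qe) e = SAASf δ Eobs Euo Ev ξ Xsec (Sum.inl qe) e)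

/-- `Am` is the attack strategy induced by the single attack structure `fm`. -/
def InducedStrategy (δ : X → E → Option X) (Eobs : Set E) (X0 : Set X)
    (fm : MState X Z E → MEvent E → Option (MState X Z E)) (z0 : Z)
    (Am : List E → Option E) : Prop :=
  Am [] = none ∧
  ∀ α σ, (α ++ [σ]) ∈ projSet Eobs (Lang δ X0) →
    ((∀ h, LeM fm (AASq0 X0 z0) h → obs h ≠ α ++ [σ]) → Am (α ++ [σ]) = some σ) ∧
    (∀ h, LeM fm (AASq0 X0 z0) h → obs h = α ++ [σ] →
        h.getLast? = some (Sum.inr (Am (α ++ [σ]))))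

/-- Attacker `A` is IS-detectable. -/
def ISDetectable (δ : X → E → Option X) (Eobs : Set E) (S : List E → Set E)
    (X0 Xsec : Set X) (A : List E → Option E) : Prop :=
  ∃ α σ, σ ∈ Eobs ∧
    (α ++ [σ]) ∈ projSet Eobs (CLLangAll δ Eobs (fun β => S (gA A β)) X0) ∧
    (ECest δ Eobs S X0 (gA A α)).Nonempty ∧
    EIest δ Eobs (fun β => S (gA A β)) X0 (α ++ [σ]) ⊆ Xsec


/-! ### Helper material -/

theorem runStr_append (δ : X → E → Option X) (x : X) (s t : List E) :
    runStr δ x (s ++ t) = (runStr δ x s).bind fun y => runStr δ y t := by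
  induction s generalizing x with
  | nil => simp [runStr]
  | cons a s ih =>
    simp only [List.cons_append, runStr]
    cases δ x a <;> simp [ih]

theorem runStr_single (δ : X → E → Option X) (x : X) (a : E) :
    runStr δ x [a] = δ x a := by
  simp only [runStr]; cases δ x a <;> rfl

theorem runStr_snoc (δ : X → E → Option X) (x : X) (s : List E) (a : E) :
    runStr δ x (s ++ [a]) = (runStr δ x s).bind fun y => δ y a := by
  rw [runStr_append]; congr; funext y; exact runStr_single δ y a

theorem runStr_aug (δ : X → E → Option X) (p : X × X) (s : List E) :
    runStr (augDelta δ) p s = (runStr δ p.2 s).map fun y => (p.1, y) := by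
  induction s generalizing p with
  | nil => simp [runStr]
  | cons a s ih =>
    simp only [runStr, augDelta]
    cases δ p.2 a <;> simp [ih]

theorem proj_snoc_obs {Eobs : Set E} {σ : E} (h : σ ∈ Eobs) (s : List E) :
    proj Eobs (s ++ [σ]) = proj Eobs s ++ [σ] := by
  simp [proj, h]

theorem proj_snoc_uo {Eobs : Set E} {σ : E} (h : σ ∉ Eobs) (s : List E) :
    proj Eobs (s ++ [σ]) = proj Eobs s := by
  simp [proj, h]

theorem gA_snoc (A : List E → Option E) (β : List E) (σ : E) :
    gA A (β ++ [σ]) = gA A β ++ (A (β ++ [σ])).toList := by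
  unfold gA
  rw [List.length_append, List.length_singleton, List.range_succ, List.filterMap_append]
  congr 1
  · apply List.filterMap_congr
    intro i hi
    rw [List.mem_range] at hi
    rw [List.take_append_of_le_length (by omega)]
  · rw [List.filterMap_cons]
    rw [List.take_of_length_le (by simp)]
    cases A (β ++ [σ]) <;> simp

theorem gA_nil (A : List E → Option E) : gA A [] = [] := by simp [gA]

/-- States reachable in closed loop from `x0` with observation `α`. -/
def Rset (δ : X → E → Option X) (Eobs : Set E) (S : List E → Set E) (x0 : X)
    (α : List E) : Set X :=
  {x | ∃ s, CLLang δ Eobs S x0 s ∧ proj Eobs s = α ∧ runStr δ x0 s = some x}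

section
variable {δ : X → E → Option X} {Eobs Euo Ev : Set E}

theorem CLLang.run {S : List E → Set E} {x0 : X} {s : List E} (h : CLLang δ Eobs S x0 s) :
    ∃ x, runStr δ x0 s = some x := by
  cases h with
  | nil => exact ⟨x0, rfl⟩
  | snoc s σ _ h2 _ => exact Option.isSome_iff_exists.1 h2

theorem Rset_extend (hpart : ∀ e, e ∈ Euo ↔ e ∉ Eobs) {S : List E → Set E} {x0 y : X}
    {α : List E} (hy : y ∈ Rset δ Eobs S x0 α) (w : List E) {x : X}
    (hw : ∀ e ∈ w, e ∈ Euo ∩ S α) (hx : runStr δ y w = some x) :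
    x ∈ Rset δ Eobs S x0 α := by
  induction w generalizing y with
  | nil => simp only [runStr, Option.some.injEq] at hx; exact hx ▸ hy
  | cons a w ih =>
    simp only [runStr] at hx
    obtain ⟨y', h1, h2⟩ := Option.bind_eq_some_iff.1 hx
    refine ih ?_ (fun e he => hw e (List.mem_cons_of_mem _ he)) h2
    obtain ⟨s, hs, hp, hr⟩ := hy
    have ha := hw a List.mem_cons_self
    have hr' : runStr δ x0 (s ++ [a]) = some y' := by rw [runStr_snoc, hr]; exact h1
    refine ⟨s ++ [a], CLLang.snoc s a hs (by rw [hr']; rfl) (by rw [hp]; exact ha.2), ?_, hr'⟩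
    rw [proj_snoc_uo ((hpart a).1 ha.1), hp]

theorem Rset_nil (hpart : ∀ e, e ∈ Euo ↔ e ∉ Eobs) {S : List E → Set E} {x0 x : X} :
    x ∈ Rset δ Eobs S x0 [] ↔ ∃ w, (∀ e ∈ w, e ∈ Euo ∩ S []) ∧ runStr δ x0 w = some x := by
  constructor
  · rintro ⟨s, hs, hp, hr⟩
    refine ⟨s, ?_, hr⟩
    clear hr
    induction hs with
    | nil => simp
    | snoc s σ h1 h2 h3 ih =>
      by_cases ho : σ ∈ Eobs
      · rw [proj_snoc_obs ho] at hp; simp at hp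
      · rw [proj_snoc_uo ho] at hp
        rw [hp] at h3
        intro e he
        rcases List.mem_append.1 he with he | he
        · exact ih hp e he
        · rw [List.mem_singleton.1 he]; exact ⟨(hpart σ).2 ho, h3⟩
  · rintro ⟨w, hw, hr⟩
    exact Rset_extend hpart (y := x0) ⟨[], CLLang.nil, rfl, rfl⟩ w hw hr

theorem Rset_snoc (hpart : ∀ e, e ∈ Euo ↔ e ∉ Eobs) {S : List E → Set E} {x0 x : X}
    {α : List E} {σ : E} :
    x ∈ Rset δ Eobs S x0 (α ++ [σ]) ↔ ∃ y ∈ Rset δ Eobs S x0 α, σ ∈ Eobs ∧ σ ∈ S α ∧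
      ∃ y', δ y σ = some y' ∧ ∃ w, (∀ e ∈ w, e ∈ Euo ∩ S (α ++ [σ])) ∧
        runStr δ y' w = some x := by
  constructor
  · rintro ⟨s, hs, hp, hr⟩
    induction hs generalizing x with
    | nil => simp [proj] at hp
    | snoc s τ h1 h2 h3 ih =>
      rw [runStr_snoc] at hr
      obtain ⟨u, hu, hux⟩ := Option.bind_eq_some_iff.1 hr
      by_cases ho : τ ∈ Eobs
      · rw [proj_snoc_obs ho] at hp
        obtain ⟨hp1, hp2⟩ := List.append_inj' hp rfl
        simp only [List.cons.injEq, and_true] at hp2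
        subst hp2
        refine ⟨u, ⟨s, h1, hp1, hu⟩, ho, hp1 ▸ h3, x, hux, [], by simp, rfl⟩
      · rw [proj_snoc_uo ho] at hp
        obtain ⟨y, hy, a, b, y', c, w, hw, hwr⟩ := ih hp hu
        refine ⟨y, hy, a, b, y', c, w ++ [τ], ?_, ?_⟩
        · intro e he
          rcases List.mem_append.1 he with he | he
          · exact hw e he
          · rw [List.mem_singleton.1 he]; exact ⟨(hpart τ).2 ho, hp ▸ h3⟩
        · rw [runStr_snoc, hwr]; exact hux
  · rintro ⟨y, ⟨s, hs, hp, hr⟩, a, b, y', c, w, hw, hwr⟩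
    refine Rset_extend hpart (y := y') ?_ w hw hwr
    have hr' : runStr δ x0 (s ++ [σ]) = some y' := by rw [runStr_snoc, hr]; exact c
    exact ⟨s ++ [σ], CLLang.snoc s σ hs (by rw [hr']; rfl) (by rw [hp]; exact b),
      by rw [proj_snoc_obs a, hp], hr'⟩

/-- Augmented closed-loop estimate. -/
def Tset (δ : X → E → Option X) (Eobs : Set E) (S : List E → Set E) (X0 : Set X)
    (α : List E) : Set (X × X) := {p | p.1 ∈ X0 ∧ p.2 ∈ Rset δ Eobs S p.1 α}

theorem mem_ECest {S : List E → Set E} {X0 : Set X} {α : List E} {x : X} :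
    x ∈ ECest δ Eobs S X0 α ↔ ∃ x0 ∈ X0, x ∈ Rset δ Eobs S x0 α := Iff.rfl

theorem EIest_eq {S : List E → Set E} {X0 : Set X} {α : List E} :
    EIest δ Eobs S X0 α = Iset (Tset δ Eobs S X0 α) := by
  ext x0
  constructor
  · rintro ⟨h0, s, hs, hp⟩
    obtain ⟨x, hx⟩ := hs.run
    exact ⟨(x0, x), ⟨h0, s, hs, hp, hx⟩, rfl⟩
  · rintro ⟨⟨a, x⟩, ⟨h0, s, hs, hp, hx⟩, rfl⟩
    exact ⟨h0, s, hs, hp⟩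

theorem mem_projSet {S : List E → Set E} {X0 : Set X} {α : List E} :
    α ∈ projSet Eobs (CLLangAll δ Eobs S X0) ↔ (Tset δ Eobs S X0 α).Nonempty := by
  constructor
  · rintro ⟨s, ⟨x0, h0, hs⟩, hp⟩
    obtain ⟨x, hx⟩ := hs.run
    exact ⟨(x0, x), h0, s, hs, hp, hx⟩
  · rintro ⟨⟨x0, x⟩, h0, s, hs, hp, hx⟩
    exact ⟨s, ⟨x0, h0, hs⟩, hp⟩

theorem projSet_sub {S : List E → Set E} {X0 : Set X} {α : List E}
    (h : α ∈ projSet Eobs (CLLangAll δ Eobs S X0)) : α ∈ projSet Eobs (Lang δ X0) := by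
  obtain ⟨s, ⟨x0, h0, hs⟩, hp⟩ := h
  obtain ⟨x, hx⟩ := hs.run
  exact ⟨s, ⟨x0, h0, by simp [LangFrom, hx]⟩, hp⟩

theorem UR_self (γ : Set E) (q : Set X) : q ⊆ URset δ Euo γ q :=
  fun x hx => ⟨x, hx, [], by simp, rfl⟩

theorem UR_UR (γ : Set E) (q : Set X) :
    URset δ Euo γ (URset δ Euo γ q) = URset δ Euo γ q := by
  apply Set.Subset.antisymm
  · rintro y ⟨x, ⟨x', hx', s, hs, hr⟩, t, ht, hr'⟩
    refine ⟨x', hx', s ++ t, ?_, ?_⟩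
    · intro e he
      rcases List.mem_append.1 he with he | he
      · exact hs e he
      · exact ht e he
    · rw [runStr_append, hr]; exact hr'
  · exact UR_self _ _

theorem mem_UR_aug {γ : Set E} {qt : Set (X × X)} {p : X × X} :
    p ∈ URset (augDelta δ) Euo γ qt ↔
      ∃ y, (p.1, y) ∈ qt ∧ ∃ w, (∀ e ∈ w, e ∈ Euo ∩ γ) ∧ runStr δ y w = some p.2 := by
  constructor
  · rintro ⟨⟨x0, y⟩, hq, w, hw, hr⟩
    rw [runStr_aug] at hr
    obtain ⟨u, hu, rfl⟩ := Option.map_eq_some_iff.1 hr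
    exact ⟨y, hq, w, hw, hu⟩
  · rintro ⟨y, hq, w, hw, hr⟩
    exact ⟨_, hq, w, hw, by rw [runStr_aug, hr]; rfl⟩

theorem mem_NX_aug {σ : E} {qt : Set (X × X)} {p : X × X} :
    p ∈ NXset (augDelta δ) σ qt ↔ ∃ y, (p.1, y) ∈ qt ∧ δ y σ = some p.2 := by
  constructor
  · rintro ⟨⟨x0, y⟩, hq, hr⟩
    simp only [augDelta] at hr
    obtain ⟨u, hu, rfl⟩ := Option.map_eq_some_iff.1 hr
    exact ⟨y, hq, hu⟩
  · rintro ⟨y, hq, hr⟩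
    exact ⟨_, hq, by simp [augDelta, hr]⟩

theorem Iset_UR (γ : Set E) (qt : Set (X × X)) :
    Iset (URset (augDelta δ) Euo γ qt) = Iset qt := by
  apply Set.Subset.antisymm
  · rintro _ ⟨p, hp, rfl⟩
    obtain ⟨y, hy, _⟩ := mem_UR_aug.1 hp
    exact ⟨_, hy, rfl⟩
  · exact Set.image_mono (UR_self _ _)

theorem mem_Oset {q : Set X} {γ : Set E} {σ : E} :
    σ ∈ Oset δ Eobs Euo q γ ↔
      σ ∈ Eobs ∩ γ ∧ (NXset δ σ (URset δ Euo γ q)).Nonempty := by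
  constructor
  · rintro ⟨h, x, hx, w, hw, hr⟩
    obtain ⟨y, hy⟩ := Option.isSome_iff_exists.1 hr
    rw [runStr_snoc] at hy
    obtain ⟨u, hu, hy⟩ := Option.bind_eq_some_iff.1 hy
    exact ⟨h, y, u, ⟨x, hx, w, hw, hu⟩, hy⟩
  · rintro ⟨h, y, u, ⟨x, hx, w, hw, hu⟩, hy⟩
    exact ⟨h, x, hx, w, hw, by rw [runStr_snoc, hu]; simp [hy]⟩

theorem Tset_nil (hpart : ∀ e, e ∈ Euo ↔ e ∉ Eobs) {S : List E → Set E} {X0 : Set X} :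
    Tset δ Eobs S X0 [] = URset (augDelta δ) Euo (S []) (augX0 X0) := by
  ext ⟨x0, x⟩
  rw [mem_UR_aug]
  simp only [Tset, Set.mem_setOf_eq, Rset_nil hpart, augX0]
  constructor
  · rintro ⟨h0, w, hw, hr⟩; exact ⟨x0, ⟨h0, rfl⟩, w, hw, hr⟩
  · rintro ⟨y, ⟨h0, rfl⟩, w, hw, hr⟩; exact ⟨h0, w, hw, hr⟩

theorem ECest_nil (hpart : ∀ e, e ∈ Euo ↔ e ∉ Eobs) {S : List E → Set E} {X0 : Set X} :
    ECest δ Eobs S X0 [] = URset δ Euo (S []) X0 := by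
  ext x
  simp only [mem_ECest, Rset_nil hpart]; rfl

theorem Tset_snoc (hpart : ∀ e, e ∈ Euo ↔ e ∉ Eobs) {S : List E → Set E} {X0 : Set X}
    {α : List E} {σ : E} (ho : σ ∈ Eobs) (hc : σ ∈ S α) :
    Tset δ Eobs S X0 (α ++ [σ]) = URset (augDelta δ) Euo (S (α ++ [σ]))
      (NXset (augDelta δ) σ (Tset δ Eobs S X0 α)) := by
  ext ⟨x0, x⟩
  rw [mem_UR_aug]
  simp only [mem_NX_aug]
  simp only [Tset, Set.mem_setOf_eq, Rset_snoc hpart]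
  constructor
  · rintro ⟨h0, y, hy, _, _, y', h1, w, hw, hr⟩
    exact ⟨y', ⟨y, ⟨h0, hy⟩, h1⟩, w, hw, hr⟩
  · rintro ⟨y', ⟨y, ⟨h0, hy⟩, h1⟩, w, hw, hr⟩
    exact ⟨h0, y, hy, ho, hc, y', h1, w, hw, hr⟩

theorem Tset_snoc_ne (hpart : ∀ e, e ∈ Euo ↔ e ∉ Eobs) {S : List E → Set E} {X0 : Set X}
    {α : List E} {σ : E} (h : (Tset δ Eobs S X0 (α ++ [σ])).Nonempty) :
    σ ∈ Eobs ∧ σ ∈ S α ∧ (Tset δ Eobs S X0 α).Nonempty := by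
  obtain ⟨⟨x0, x⟩, h0, hx⟩ := h
  obtain ⟨y, hy, a, b, _⟩ := (Rset_snoc hpart).1 hx
  exact ⟨a, b, (x0, y), h0, hy⟩

theorem Tset_prefix_ne (hpart : ∀ e, e ∈ Euo ↔ e ∉ Eobs) {S : List E → Set E} {X0 : Set X}
    {α β : List E} (h : (Tset δ Eobs S X0 (α ++ β)).Nonempty) :
    (Tset δ Eobs S X0 α).Nonempty := by
  induction β using List.reverseRecOn with
  | nil => simpa using h
  | append_singleton β b ih =>
    rw [← List.append_assoc] at h
    exact ih (Tset_snoc_ne hpart h).2.2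

theorem ECest_snoc (hpart : ∀ e, e ∈ Euo ↔ e ∉ Eobs) {S : List E → Set E} {X0 : Set X}
    {α : List E} {σ : E} (ho : σ ∈ Eobs) (hc : σ ∈ S α) :
    ECest δ Eobs S X0 (α ++ [σ]) = URset δ Euo (S (α ++ [σ]))
      (NXset δ σ (ECest δ Eobs S X0 α)) := by
  ext x
  simp only [mem_ECest, Rset_snoc hpart]
  constructor
  · rintro ⟨x0, h0, y, hy, _, _, y', h1, w, hw, hr⟩
    exact ⟨y', ⟨y, ⟨x0, h0, hy⟩, h1⟩, w, hw, hr⟩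
  · rintro ⟨y', ⟨y, ⟨x0, h0, hy⟩, h1⟩, w, hw, hr⟩
    exact ⟨x0, h0, y, hy, ho, hc, y', h1, w, hw, hr⟩

theorem ECest_snoc_ne (hpart : ∀ e, e ∈ Euo ↔ e ∉ Eobs) {S : List E → Set E} {X0 : Set X}
    {α : List E} {σ : E} (h : (ECest δ Eobs S X0 (α ++ [σ])).Nonempty) :
    σ ∈ Eobs ∧ σ ∈ S α ∧ (ECest δ Eobs S X0 α).Nonempty := by
  obtain ⟨x, x0, h0, hx⟩ := h
  obtain ⟨y, hy, a, b, _⟩ := (Rset_snoc hpart).1 hx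
  exact ⟨a, b, y, x0, h0, hy⟩

theorem ECest_prefix_ne (hpart : ∀ e, e ∈ Euo ↔ e ∉ Eobs) {S : List E → Set E} {X0 : Set X}
    {α β : List E} (h : (ECest δ Eobs S X0 (α ++ β)).Nonempty) :
    (ECest δ Eobs S X0 α).Nonempty := by
  induction β using List.reverseRecOn with
  | nil => simpa using h
  | append_singleton β b ih =>
    rw [← List.append_assoc] at h
    exact ih (ECest_snoc_ne hpart h).2.2

theorem gA_append (A : List E → Option E) (β γ : List E) :
    ∃ t, gA A (β ++ γ) = gA A β ++ t := by
  induction γ using List.reverseRecOn with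
  | nil => exact ⟨[], by simp⟩
  | append_singleton γ b ih =>
    obtain ⟨t, ht⟩ := ih
    exact ⟨t ++ (A (β ++ γ ++ [b])).toList, by rw [← List.append_assoc, gA_snoc, ht,
      List.append_assoc]⟩

/-- Supervisor automaton state after a stealthy observation. -/
theorem real_state {ξ : Z → E → Option Z} {z0 : Z} {S : List E → Set E} {X0 : Set X}
    (hreal : Realizes ξ z0 δ Eobs S X0) {β : List E}
    (h : (ECest δ Eobs S X0 β).Nonempty) :
    ∃ z, runStr ξ z0 β = some z ∧ ΔH ξ z = S β := by
  obtain ⟨x, x0, h0, s, hs, hp, hr⟩ := h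
  obtain ⟨z, hz, hd⟩ := hreal.2 s ⟨x0, h0, hs⟩
  refine ⟨z, ?_, hp ▸ hd⟩
  rw [← hp]
  clear hs hp hr hd h0
  generalize z0 = z1 at hz hreal
  have h1 := hreal.1
  clear hreal
  induction s generalizing z1 with
  | nil => exact hz
  | cons a s ih =>
    simp only [runStr] at hz
    obtain ⟨z', ha, hb⟩ := Option.bind_eq_some_iff.1 hz
    by_cases ho : a ∈ Eobs
    · have : proj Eobs (a :: s) = a :: proj Eobs s := by simp [proj, ho]
      rw [this]; simp only [runStr, ha]
      exact ih _ hb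
    · have : proj Eobs (a :: s) = proj Eobs s := by simp [proj, ho]
      rw [this]
      have hz' : z' = z1 := by
        by_contra hne
        exact ho (h1 _ _ _ ha hne)
      exact ih _ (hz' ▸ hb)

/-- Supervisor-side update. -/
def qnx (δ : X → E → Option X) (Euo γ : Set E) (q : Set X) : Option E → Set X
  | some σa => NXset δ σa (URset δ Euo γ q)
  | none => URset δ Euo γ q

variable {ξ : Z → E → Option Z}

theorem AASf_atk {q : Set X} {qt : Set (X × X)} {z : Z} {σ : E} {a : Option E}
    {st : MState X Z E} :
    AASf δ Eobs Euo Ev ξ (Sum.inr (q, qt, z, σ)) (Sum.inr a) = some st ↔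
      a ∈ Vmap Ev σ ∧ ∃ o : Option Z,
        st = Sum.inl (qnx δ Euo (ΔH ξ z) q a,
          NXset (augDelta δ) σ (URset (augDelta δ) Euo (ΔH ξ z) qt), o) ∧
        (((qnx δ Euo (ΔH ξ z) q a).Nonempty ∧ o.isSome ∧ runStr ξ z a.toList = o) ∨
          (¬ (qnx δ Euo (ΔH ξ z) q a).Nonempty ∧ o = none)) := by
  by_cases hV : a ∈ Vmap Ev σ
  · by_cases hN : (qnx δ Euo (ΔH ξ z) q a).Nonempty
    · cases a with
      | none =>
        simp only [qnx] at hN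
        simp only [AASf, hV, qnx, hN, if_true, Option.toList, runStr, true_and, not_true,
          false_and, or_false, Option.some.injEq]
        constructor
        · rintro rfl; exact ⟨some z, rfl, rfl, rfl⟩
        · rintro ⟨o, rfl, _, rfl⟩; rfl
      | some σa =>
        simp only [qnx] at hN
        simp only [AASf, hV, qnx, hN, if_true, Option.toList, runStr_single, true_and, not_true,
          false_and, or_false, Option.map_eq_some_iff]
        constructor
        · rintro ⟨z', h, rfl⟩; exact ⟨some z', rfl, rfl, h⟩
        · rintro ⟨o, rfl, h1, h2⟩
          obtain ⟨z', rfl⟩ := Option.isSome_iff_exists.1 h1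
          exact ⟨z', h2, rfl⟩
    · cases a with
      | none =>
        simp only [qnx] at hN
        simp only [AASf, hV, qnx, hN, if_true, if_false, true_and, not_false_eq_true,
          false_and, false_or, Option.some.injEq]
        constructor
        · rintro rfl; exact ⟨none, rfl, rfl⟩
        · rintro ⟨o, rfl, rfl⟩; rfl
      | some σa =>
        simp only [qnx] at hN
        simp only [AASf, hV, qnx, hN, if_true, if_false, true_and, not_false_eq_true,
          false_and, false_or, Option.some.injEq]
        constructor
        · rintro rfl; exact ⟨none, rfl, rfl⟩
        · rintro ⟨o, rfl, rfl⟩; rfl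
  · constructor
    · intro h; simp [AASf, hV] at h
    · rintro ⟨h, _⟩; exact absurd h hV

theorem AASf_to_inr {st : MState X Z E} {e : MEvent E} {qa : AtkState X Z E}
    (h : AASf δ Eobs Euo Ev ξ st e = some (Sum.inr qa)) :
    e = Sum.inl qa.2.2.2 ∧ st = Sum.inl (qa.1, qa.2.1, some qa.2.2.1) ∧
      qa.2.2.2 ∈ Oset (augDelta δ) Eobs Euo qa.2.1 (ΔH ξ qa.2.2.1) := by
  rcases st with ⟨q, qt, _ | z⟩ | ⟨q, qt, z, σ⟩ <;> rcases e with τ | a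
  · simp [AASf] at h
  · simp [AASf] at h
  · simp only [AASf] at h
    split_ifs at h with hO
    simp only [Option.some.injEq, Sum.inr.injEq] at h
    subst h
    exact ⟨rfl, rfl, hO⟩
  · simp [AASf] at h
  · simp [AASf] at h
  · obtain ⟨_, o, h, _⟩ := AASf_atk.1 h
    simp at h

theorem AASf_to_inl {st : MState X Z E} {e : MEvent E} {qe : EnvState X Z}
    (h : AASf δ Eobs Euo Ev ξ st e = some (Sum.inl qe)) :
    ∃ qa a, st = Sum.inr qa ∧ e = Sum.inr a ∧ a ∈ Vmap Ev qa.2.2.2 := by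
  rcases st with ⟨q, qt, _ | z⟩ | ⟨q, qt, z, σ⟩ <;> rcases e with τ | a
  · simp [AASf] at h
  · simp [AASf] at h
  · simp only [AASf] at h
    split_ifs at h
    simp at h
  · simp [AASf] at h
  · simp [AASf] at h
  · exact ⟨_, a, rfl, rfl, (AASf_atk.1 h).1⟩

theorem SAASf_sub {Xsec : Set X} {st st' : MState X Z E} {e : MEvent E}
    (h : SAASf δ Eobs Euo Ev ξ Xsec st e = some st') :
    AASf δ Eobs Euo Ev ξ st e = some st' := by
  unfold SAASf at h
  rcases st with qe | qa
  · simp only at h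
    split_ifs at h
    exact h
  · exact h

/-- Last two events of a nonempty extended string of a substructure. -/
theorem LeM_last {f : MState X Z E → MEvent E → Option (MState X Z E)}
    (hf : ∀ st e st', f st e = some st' → AASf δ Eobs Euo Ev ξ st e = some st')
    {e0 : EnvState X Z} {h : List (MEvent E)} (hL : LeM f (Sum.inl e0) h) :
    h = [] ∨ ∃ h' qa a, h = h' ++ [Sum.inl qa.2.2.2, Sum.inr a] ∧ a ∈ Vmap Ev qa.2.2.2 ∧
      LeM f (Sum.inl e0) h' ∧ runStr f (Sum.inl e0) (h' ++ [Sum.inl qa.2.2.2]) =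
        some (Sum.inr qa) ∧ (f (Sum.inr qa) (Sum.inr a)).isSome := by
  rcases List.eq_nil_or_concat h with rfl | ⟨h1, e, rfl⟩
  · exact Or.inl rfl
  right
  obtain ⟨qe, hq⟩ := hL
  rw [List.concat_eq_append, runStr_snoc] at hq
  obtain ⟨st, hst, hq2⟩ := Option.bind_eq_some_iff.1 hq
  obtain ⟨qa, a, rfl, rfl, ha⟩ := AASf_to_inl (hf _ _ _ hq2)
  rcases List.eq_nil_or_concat h1 with rfl | ⟨h2, e, rfl⟩
  · simp [runStr] at hst
  rw [List.concat_eq_append] at hst ⊢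
  have hst0 := hst
  rw [runStr_snoc] at hst
  obtain ⟨st, hst1, hst2⟩ := Option.bind_eq_some_iff.1 hst
  obtain ⟨rfl, rfl, _⟩ := AASf_to_inr (hf _ _ _ hst2)
  refine ⟨h2, qa, a, by simp, ha, ⟨_, hst1⟩, hst0, by rw [hq2]; rfl⟩

theorem obs_two (h : List (MEvent E)) (σ : E) (a : Option E) :
    obs (h ++ [Sum.inl σ, Sum.inr a]) = obs h ++ [σ] := by
  simp [obs]

/-- Uniqueness of the extended string with a given observation. -/
theorem LeM_unique {f : MState X Z E → MEvent E → Option (MState X Z E)}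
    (hf : ∀ st e st', f st e = some st' → AASf δ Eobs Euo Ev ξ st e = some st')
    (π : AtkState X Z E → Option E)
    (hπ : ∀ qa a, (f (Sum.inr qa) (Sum.inr a)).isSome → a = π qa)
    {e0 : EnvState X Z} (α : List E) {h1 h2 : List (MEvent E)}
    (hL1 : LeM f (Sum.inl e0) h1) (hL2 : LeM f (Sum.inl e0) h2)
    (ho1 : obs h1 = α) (ho2 : obs h2 = α) : h1 = h2 := by
  induction α using List.reverseRecOn generalizing h1 h2 with
  | nil =>
    rcases LeM_last hf hL1 with rfl | ⟨h1, qa, a, rfl, _⟩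
    · rcases LeM_last hf hL2 with rfl | ⟨h2, qa, a, rfl, _⟩
      · rfl
      · rw [obs_two] at ho2; simp at ho2
    · rw [obs_two] at ho1; simp at ho1
  | append_singleton α σ ih =>
    rcases LeM_last hf hL1 with rfl | ⟨h1, qa, a, rfl, _, l1, r1, s1⟩
    · simp [obs] at ho1
    rcases LeM_last hf hL2 with rfl | ⟨h2, qb, b, rfl, _, l2, r2, s2⟩
    · simp [obs] at ho2
    rw [obs_two] at ho1 ho2
    obtain ⟨o1, p1⟩ := List.append_inj' ho1 rfl
    obtain ⟨o2, p2⟩ := List.append_inj' ho2 rfl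
    simp only [List.cons.injEq, and_true] at p1 p2
    have := ih l1 l2 o1 o2
    subst this
    rw [p1] at r1
    rw [p2, r1] at r2
    simp only [Option.some.injEq, Sum.inr.injEq] at r2
    subst r2
    rw [hπ _ _ s1, hπ _ _ s2]

/-- One full step of the AAS. -/
def Step (δ : X → E → Option X) (Eobs Euo Ev : Set E) (ξ : Z → E → Option Z)
    (e : EnvState X Z) (σ : E) (a : Option E) (e' : EnvState X Z) : Prop :=
  ∃ q qt z, e = (q, qt, some z) ∧ σ ∈ Oset (augDelta δ) Eobs Euo qt (ΔH ξ z) ∧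
    AASf δ Eobs Euo Ev ξ (Sum.inr (q, qt, z, σ)) (Sum.inr a) = some (Sum.inl e')

/-- A positive detected state can be reached in `n` steps. -/
def Win (δ : X → E → Option X) (Eobs Euo Ev : Set E) (ξ : Z → E → Option Z)
    (Xsec : Set X) : ℕ → EnvState X Z → Prop
  | 0, e => PosDet Xsec e ∧ e.2.1.Nonempty
  | n + 1, e => ∃ σ a e', Step δ Eobs Euo Ev ξ e σ a e' ∧ Win δ Eobs Euo Ev ξ Xsec n e'

theorem default_isSome {q : Set X} {qt : Set (X × X)} {z : Z} {σ : E} (hσ : σ ∈ ΔH ξ z) :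
    (AASf δ Eobs Euo Ev ξ (Sum.inr (q, qt, z, σ))
      (Sum.inr (if σ ∈ Ev then none else some σ))).isSome := by
  obtain ⟨z', hz'⟩ := Option.isSome_iff_exists.1 hσ
  rw [Option.isSome_iff_exists]
  simp only [AASf_atk]
  by_cases hV : σ ∈ Ev
  · simp only [hV, if_true]
    by_cases hN : (qnx δ Euo (ΔH ξ z) q none).Nonempty
    · exact ⟨_, by simp [Vmap, hV], some z, rfl, Or.inl ⟨hN, rfl, rfl⟩⟩
    · exact ⟨_, by simp [Vmap, hV], none, rfl, Or.inr ⟨hN, rfl⟩⟩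
  · simp only [hV, if_false]
    by_cases hN : (qnx δ Euo (ΔH ξ z) q (some σ)).Nonempty
    · exact ⟨_, by simp [Vmap, hV], some z', rfl, Or.inl ⟨hN, rfl, by
        simp [runStr_single, hz']⟩⟩
    · exact ⟨_, by simp [Vmap, hV], none, rfl, Or.inr ⟨hN, rfl⟩⟩

/-- Every secret pair has a non-secret sibling. -/
def Sib (Xsec : Set X) (qt : Set (X × X)) : Prop :=
  ∀ p ∈ qt, p.1 ∈ Xsec → ∃ p' ∈ qt, p'.2 = p.2 ∧ p'.1 ∉ Xsec

theorem Sib_NX {Xsec : Set X} {qt : Set (X × X)} (h : Sib Xsec qt) (σ : E) :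
    Sib Xsec (NXset (augDelta δ) σ qt) := by
  rintro ⟨x0, x⟩ hp hs
  obtain ⟨y, hy, hd⟩ := mem_NX_aug.1 hp
  obtain ⟨⟨x1, y'⟩, h1, h2, h3⟩ := h _ hy hs
  simp only at h2; subst h2
  exact ⟨(x1, x), mem_NX_aug.2 ⟨_, h1, hd⟩, rfl, h3⟩

theorem Sib_UR {Xsec : Set X} {qt : Set (X × X)} (h : Sib Xsec qt) (γ : Set E) :
    Sib Xsec (URset (augDelta δ) Euo γ qt) := by
  rintro ⟨x0, x⟩ hp hs
  obtain ⟨y, hy, w, hw, hd⟩ := mem_UR_aug.1 hp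
  obtain ⟨⟨x1, y'⟩, h1, h2, h3⟩ := h _ hy hs
  simp only at h2; subst h2
  exact ⟨(x1, x), mem_UR_aug.2 ⟨_, h1, w, hw, hd⟩, rfl, h3⟩

theorem Step_qt {e e' : EnvState X Z} {σ : E} {a : Option E}
    (h : Step δ Eobs Euo Ev ξ e σ a e') :
    e'.2.1 = NXset (augDelta δ) σ (URset (augDelta δ) Euo (ΔHopt ξ e.2.2) e.2.1) := by
  obtain ⟨q, qt, z, rfl, _, h⟩ := h
  obtain ⟨_, o, h, _⟩ := AASf_atk.1 h
  rw [Sum.inl.injEq] at h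
  rw [h]; rfl

theorem Win_not_Sib {Xsec : Set X} (n : ℕ) (e : EnvState X Z)
    (hW : Win δ Eobs Euo Ev ξ Xsec n e)
    (hS : Sib Xsec (URset (augDelta δ) Euo (ΔHopt ξ e.2.2) e.2.1)) : False := by
  induction n generalizing e with
  | zero =>
    obtain ⟨hP, p, hp⟩ := hW
    obtain ⟨p', hp', _, hn⟩ := hS p (UR_self _ _ hp) (hP ⟨p, hp, rfl⟩)
    apply hn
    apply hP
    rw [← Iset_UR (δ := δ) (Euo := Euo) (ΔHopt ξ e.2.2)]
    exact ⟨p', hp', rfl⟩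
  | succ n ih =>
    obtain ⟨σ, a, e', hst, hW⟩ := hW
    refine ih e' hW (Sib_UR ?_ _)
    rw [Step_qt hst]
    exact Sib_NX hS σ

/-- A winning but not yet positive state keeps its transitions in the simplified AAS. -/
theorem Win_SAASf {Xsec : Set X} {n : ℕ} {e : EnvState X Z}
    (hW : Win δ Eobs Euo Ev ξ Xsec (n + 1) e) (h0 : ¬ Win δ Eobs Euo Ev ξ Xsec 0 e)
    (x : MEvent E) :
    SAASf δ Eobs Euo Ev ξ Xsec (Sum.inl e) x = AASf δ Eobs Euo Ev ξ (Sum.inl e) x := by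
  have hne : e.2.1.Nonempty := by
    obtain ⟨σ, a, e', ⟨q, qt, z, rfl, hO, _⟩, _⟩ := hW
    obtain ⟨_, p, hp, _⟩ := hO
    exact ⟨p, hp⟩
  unfold SAASf
  apply if_neg
  rintro (h | h | h)
  · exact h0 ⟨h, hne⟩
  · refine Win_not_Sib _ _ hW ?_
    intro p hp hs
    exfalso
    have : p.1 ∈ Iset e.2.1 ∩ Xsec := by
      rw [← Iset_UR (δ := δ) (Euo := Euo) (ΔHopt ξ e.2.2)]
      exact ⟨⟨p, hp, rfl⟩, hs⟩
    rw [show Iset e.2.1 ∩ Xsec = ∅ from h] at this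
    exact this
  · exact Win_not_Sib _ _ hW h.2

/-- The environment state `e` is consistent with attacker `A` and observation `β`. -/
def Cons (δ : X → E → Option X) (Eobs Euo : Set E) (ξ : Z → E → Option Z) (z0 : Z)
    (S : List E → Set E) (X0 : Set X) (A : List E → Option E) (β : List E)
    (e : EnvState X Z) : Prop :=
  ∃ q qt z, e = (q, qt, some z) ∧ runStr ξ z0 (gA A β) = some z ∧ ΔH ξ z = S (gA A β) ∧
    URset δ Euo (ΔH ξ z) q = ECest δ Eobs S X0 (gA A β) ∧
    (ECest δ Eobs S X0 (gA A β)).Nonempty ∧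
    URset (augDelta δ) Euo (ΔH ξ z) qt = Tset δ Eobs (fun β => S (gA A β)) X0 β

section
variable {z0 : Z} {S : List E → Set E} {X0 : Set X} {A : List E → Option E}

theorem Cons_nil (hpart : ∀ e, e ∈ Euo ↔ e ∉ Eobs) (hreal : Realizes ξ z0 δ Eobs S X0)
    (h0 : X0.Nonempty) : Cons δ Eobs Euo ξ z0 S X0 A [] (X0, augX0 X0, some z0) := by
  have hE : (ECest δ Eobs S X0 []).Nonempty := by
    rw [ECest_nil hpart]; exact h0.mono (UR_self _ _)
  obtain ⟨z, hz, hd⟩ := real_state hreal hE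
  simp only [runStr, Option.some.injEq] at hz
  subst hz
  refine ⟨X0, augX0 X0, z0, rfl, by rw [gA_nil]; rfl, by rw [gA_nil, hd], ?_, ?_, ?_⟩
  · rw [gA_nil, hd, ECest_nil hpart]
  · rw [gA_nil]; exact hE
  · rw [Tset_nil hpart, hd, gA_nil]

/-- Initial-state estimate after one more observation. -/
theorem Cons_EI (hpart : ∀ e, e ∈ Euo ↔ e ∉ Eobs) {β : List E} {e : EnvState X Z}
    (hC : Cons δ Eobs Euo ξ z0 S X0 A β e) {σ : E} {b : Option E} {e' : EnvState X Z}
    (hst : Step δ Eobs Euo Ev ξ e σ b e') :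
    σ ∈ Eobs ∧ (β ++ [σ]) ∈ projSet Eobs (CLLangAll δ Eobs (fun β => S (gA A β)) X0) ∧
      (ECest δ Eobs S X0 (gA A β)).Nonempty ∧
      EIest δ Eobs (fun β => S (gA A β)) X0 (β ++ [σ]) = Iset e'.2.1 := by
  obtain ⟨q, qt, z, rfl, hz, hd, hq, hne, hqt⟩ := hC
  have h1 := Step_qt hst
  obtain ⟨_, _, _, he, hO, -⟩ := hst
  cases he
  obtain ⟨⟨ho, hc⟩, hN⟩ := mem_Oset.1 hO
  simp only [ΔHopt] at h1
  rw [hqt] at h1 hN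
  rw [hd] at hc
  have hT := Tset_snoc (X0 := X0) (δ := δ) hpart (S := fun β => S (gA A β)) (α := β) ho hc
  refine ⟨ho, ?_, hne, ?_⟩
  · rw [mem_projSet, hT]; exact hN.mono (UR_self _ _)
  · rw [EIest_eq, hT, Iset_UR, h1]

theorem Vmap_obs (hv : Ev ⊆ Eobs) {σ τ : E} (ho : σ ∈ Eobs) (h : some τ ∈ Vmap Ev σ) :
    τ ∈ Eobs := by
  unfold Vmap at h
  split_ifs at h
  · simp at h; exact hv h
  · simp at h; exact h ▸ ho

/-- Consistency is preserved by a stealthy step following `A`. -/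
theorem Cons_step (hpart : ∀ e, e ∈ Euo ↔ e ∉ Eobs) (hv : Ev ⊆ Eobs)
    (hreal : Realizes ξ z0 δ Eobs S X0) {β : List E} {e : EnvState X Z}
    (hC : Cons δ Eobs Euo ξ z0 S X0 A β e) {σ : E} {e' : EnvState X Z}
    (hst : Step δ Eobs Euo Ev ξ e σ (A (β ++ [σ])) e') (hs : e'.2.2.isSome) :
    Cons δ Eobs Euo ξ z0 S X0 A (β ++ [σ]) e' := by
  obtain ⟨q, qt, z, rfl, hz, hd, hq, hne, hqt⟩ := hC
  have hg := gA_snoc A β σ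
  obtain ⟨_, _, _, he, hO, hst⟩ := hst
  cases he
  obtain ⟨⟨ho, hc⟩, hN⟩ := mem_Oset.1 hO
  obtain ⟨hV, o, he', hcase⟩ := AASf_atk.1 hst
  rw [Sum.inl.injEq] at he'
  subst he'
  simp only at hs
  rcases hcase with ⟨hqn, _, hrun⟩ | ⟨_, rfl⟩
  swap
  · simp at hs
  obtain ⟨z', rfl⟩ := Option.isSome_iff_exists.1 hs
  have hz' : runStr ξ z0 (gA A (β ++ [σ])) = some z' := by
    rw [hg, runStr_append, hz]; exact hrun
  have hE : ECest δ Eobs S X0 (gA A (β ++ [σ])) =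
      URset δ Euo (S (gA A (β ++ [σ]))) (qnx δ Euo (ΔH ξ z) q (A (β ++ [σ]))) := by
    rw [hg]
    generalize A (β ++ [σ]) = a at *
    cases a with
    | none =>
      simp only [Option.toList, List.append_nil, qnx]
      rw [← hd, UR_UR, hq]
    | some τ =>
      simp only [Option.toList, qnx, runStr_single] at hrun ⊢
      rw [hq, ECest_snoc hpart (Vmap_obs hv ho hV)]
      rw [← hd]
      simp [ΔH, hrun]
  have hE' : (ECest δ Eobs S X0 (gA A (β ++ [σ]))).Nonempty := by
    rw [hE]; exact hqn.mono (UR_self _ _)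
  obtain ⟨z'', h1, h2⟩ := real_state hreal hE'
  rw [hz', Option.some.injEq] at h1
  subst h1
  refine ⟨_, _, z', rfl, hz', h2, ?_, hE', ?_⟩
  · rw [hE, h2]
  · rw [hqt, h2]
    rw [hd] at hc
    exact (Tset_snoc (X0 := X0) (δ := δ) hpart (S := fun β => S (gA A β)) (α := β) ho hc).symm

theorem Cons_Oset (hpart : ∀ e, e ∈ Euo ↔ e ∉ Eobs) {β : List E} {q : Set X}
    {qt : Set (X × X)} {z : Z} {σ : E}
    (hC : Cons δ Eobs Euo ξ z0 S X0 A β (q, qt, some z))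
    (hT : (Tset δ Eobs (fun β => S (gA A β)) X0 (β ++ [σ])).Nonempty) :
    σ ∈ Oset (augDelta δ) Eobs Euo qt (ΔH ξ z) := by
  obtain ⟨_, _, _, he, hz, hd, hq, hne, hqt⟩ := hC
  cases he
  obtain ⟨ho, hc, _⟩ := Tset_snoc_ne hpart hT
  rw [mem_Oset]
  refine ⟨⟨ho, hd ▸ hc⟩, ?_⟩
  rw [hqt]
  rw [Tset_snoc hpart (S := fun β => S (gA A β)) (α := β) ho hc] at hT
  obtain ⟨_, p, hp, _⟩ := hT
  exact ⟨p, hp⟩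

/-- A stealthy step of an attacker exists in the AAS. -/
theorem Cons_exists (hpart : ∀ e, e ∈ Euo ↔ e ∉ Eobs)
    {β : List E} {e : EnvState X Z}
    (hC : Cons δ Eobs Euo ξ z0 S X0 A β e) {σ : E}
    (hT : (Tset δ Eobs (fun β => S (gA A β)) X0 (β ++ [σ])).Nonempty)
    (hV : A (β ++ [σ]) ∈ Vmap Ev σ)
    (hE : (ECest δ Eobs S X0 (gA A (β ++ [σ]))).Nonempty) :
    ∃ e', Step δ Eobs Euo Ev ξ e σ (A (β ++ [σ])) e' ∧ e'.2.2.isSome := by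
  have hC0 := hC
  obtain ⟨q, qt, z, rfl, hz, hd, hq, hne, hqt⟩ := hC
  have hO := Cons_Oset hpart hC0 hT
  rw [gA_snoc] at hE
  generalize A (β ++ [σ]) = a at *
  suffices ∃ z', runStr ξ z a.toList = some z' ∧ (qnx δ Euo (ΔH ξ z) q a).Nonempty by
    obtain ⟨z', h1, h2⟩ := this
    refine ⟨(_, _, some z'), ⟨q, qt, z, rfl, hO, AASf_atk.2 ⟨hV, some z', rfl, Or.inl
      ⟨h2, rfl, h1⟩⟩⟩, rfl⟩
  cases a with
  | none => exact ⟨z, rfl, by simp only [qnx]; rw [hq]; exact hne⟩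
  | some τ =>
    simp only [Option.toList] at hE ⊢
    obtain ⟨ho, hc, _⟩ := ECest_snoc_ne hpart hE
    rw [ECest_snoc hpart ho hc] at hE
    rw [← hd] at hc
    obtain ⟨z', hz'⟩ := Option.isSome_iff_exists.1 hc
    refine ⟨z', by rw [runStr_single]; exact hz', ?_⟩
    simp only [qnx]
    rw [hq]
    obtain ⟨_, p, hp, _⟩ := hE
    exact ⟨p, hp⟩

theorem attacker_V (hA : IsAttacker δ Eobs Ev X0 A) {β : List E} {σ : E}
    (h : (β ++ [σ]) ∈ projSet Eobs (Lang δ X0)) : A (β ++ [σ]) ∈ Vmap Ev σ := by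
  by_cases hσ : σ ∈ Ev
  · exact (hA.2 β σ h).2 hσ
  · rw [(hA.2 β σ h).1 hσ]; simp [Vmap, hσ]

/-- A detection by `A` yields a winning path of the AAS. -/
theorem attack_Win (hpart : ∀ e, e ∈ Euo ↔ e ∉ Eobs) (hv : Ev ⊆ Eobs)
    (hreal : Realizes ξ z0 δ Eobs S X0) {Xsec : Set X} (hA : IsAttacker δ Eobs Ev X0 A)
    (γ : List E) (σ : E) (β : List E) (e : EnvState X Z)
    (hC : Cons δ Eobs Euo ξ z0 S X0 A β e)
    (hT : (Tset δ Eobs (fun β => S (gA A β)) X0 (β ++ γ ++ [σ])).Nonempty)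
    (hE : (ECest δ Eobs S X0 (gA A (β ++ γ))).Nonempty)
    (hI : EIest δ Eobs (fun β => S (gA A β)) X0 (β ++ γ ++ [σ]) ⊆ Xsec) :
    ∃ n, Win δ Eobs Euo Ev ξ Xsec (n + 1) e := by
  induction γ generalizing β e with
  | nil =>
    rw [List.append_nil] at hT hE hI
    have hC0 := hC
    obtain ⟨q, qt, z, rfl, -⟩ := hC
    have hO := Cons_Oset hpart hC0 hT
    obtain ⟨st, hst⟩ := Option.isSome_iff_exists.1
      (default_isSome (δ := δ) (Eobs := Eobs) (Euo := Euo) (Ev := Ev) (q := q) (qt := qt) hO.1.2)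
    obtain ⟨_, o, rfl, _⟩ := AASf_atk.1 hst
    have hs : Step δ Eobs Euo Ev ξ (q, qt, some z) σ _ _ := ⟨q, qt, z, rfl, hO, hst⟩
    refine ⟨0, σ, _, _, hs, ?_, (mem_Oset.1 hO).2⟩
    obtain ⟨_, _, _, h4⟩ := Cons_EI hpart hC0 hs
    rw [h4] at hI
    exact hI
  | cons τ γ ih =>
    rw [show β ++ τ :: γ = (β ++ [τ]) ++ γ by simp] at hT hE hI
    have hT1 : (Tset δ Eobs (fun β => S (gA A β)) X0 (β ++ [τ])).Nonempty := by
      rw [List.append_assoc] at hT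
      exact Tset_prefix_ne hpart hT
    have hE1 : (ECest δ Eobs S X0 (gA A (β ++ [τ]))).Nonempty := by
      obtain ⟨t, ht⟩ := gA_append A (β ++ [τ]) γ
      rw [ht] at hE
      exact ECest_prefix_ne hpart hE
    obtain ⟨e', hst, hs⟩ := Cons_exists (Ev := Ev) hpart hC hT1
      (attacker_V hA (projSet_sub (mem_projSet.2 hT1))) hE1
    obtain ⟨n, hn⟩ := ih _ e' (Cons_step hpart hv hreal hC hst hs) hT hE hI
    exact ⟨n + 1, τ, _, e', hst, hn⟩

end

/-- Rank-minimizing property of a policy. -/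
def GoodPol (δ : X → E → Option X) (Eobs Euo Ev : Set E) (ξ : Z → E → Option Z)
    (Xsec : Set X) (π : AtkState X Z E → Option E) : Prop :=
  (∀ qa : AtkState X Z E, qa.2.2.2 ∈ ΔH ξ qa.2.2.1 →
    (AASf δ Eobs Euo Ev ξ (Sum.inr qa) (Sum.inr (π qa))).isSome) ∧
  (∀ qa a e' n, AASf δ Eobs Euo Ev ξ (Sum.inr qa) (Sum.inr a) = some (Sum.inl e') →
    Win δ Eobs Euo Ev ξ Xsec n e' → ∃ e'' m, m ≤ n ∧
      AASf δ Eobs Euo Ev ξ (Sum.inr qa) (Sum.inr (π qa)) = some (Sum.inl e'') ∧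
      Win δ Eobs Euo Ev ξ Xsec m e'')

theorem exists_GoodPol (δ : X → E → Option X) (Eobs Euo Ev : Set E) (ξ : Z → E → Option Z)
    (Xsec : Set X) : ∃ π, GoodPol δ Eobs Euo Ev ξ Xsec π := by
  have key : ∀ qa : AtkState X Z E, ∃ b : Option E, (qa.2.2.2 ∈ ΔH ξ qa.2.2.1 →
      (AASf δ Eobs Euo Ev ξ (Sum.inr qa) (Sum.inr b)).isSome) ∧
      (∀ a e' n, AASf δ Eobs Euo Ev ξ (Sum.inr qa) (Sum.inr a) = some (Sum.inl e') →
        Win δ Eobs Euo Ev ξ Xsec n e' → ∃ e'' m, m ≤ n ∧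
          AASf δ Eobs Euo Ev ξ (Sum.inr qa) (Sum.inr b) = some (Sum.inl e'') ∧
          Win δ Eobs Euo Ev ξ Xsec m e'') := by
    intro qa
    by_cases h : ∃ n a e', AASf δ Eobs Euo Ev ξ (Sum.inr qa) (Sum.inr a) = some (Sum.inl e') ∧
        Win δ Eobs Euo Ev ξ Xsec n e'
    · obtain ⟨b, e'', h1, h2⟩ := Nat.find_spec h
      refine ⟨b, fun _ => by rw [h1]; rfl, fun a e' n ha hn => ⟨e'', _, ?_, h1, h2⟩⟩
      exact Nat.find_min' h ⟨a, e', ha, hn⟩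
    · refine ⟨if qa.2.2.2 ∈ Ev then none else some qa.2.2.2, fun hσ => default_isSome hσ, ?_⟩
      intro a e' n ha hn
      exact absurd ⟨n, a, e', ha, hn⟩ h
  choose π hπ using key
  exact ⟨π, fun qa => (hπ qa).1, fun qa => (hπ qa).2⟩

/-- The single attack structure determined by a policy. -/
noncomputable def fpol (δ : X → E → Option X) (Eobs Euo Ev : Set E) (ξ : Z → E → Option Z)
    (Xsec : Set X) (π : AtkState X Z E → Option E) :
    MState X Z E → MEvent E → Option (MState X Z E)
  | Sum.inl qe, e => SAASf δ Eobs Euo Ev ξ Xsec (Sum.inl qe) e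
  | Sum.inr qa, e => if e = Sum.inr (π qa) then AASf δ Eobs Euo Ev ξ (Sum.inr qa) e else none

variable {Xsec X0 : Set X} {π : AtkState X Z E → Option E} {z0 : Z}

theorem fpol_sub_S {st e st'} (h : fpol δ Eobs Euo Ev ξ Xsec π st e = some st') :
    SAASf δ Eobs Euo Ev ξ Xsec st e = some st' := by
  rcases st with qe | qa
  · exact h
  · simp only [fpol] at h
    split_ifs at h
    exact h

theorem fpol_sub {st e st'} (h : fpol δ Eobs Euo Ev ξ Xsec π st e = some st') :
    AASf δ Eobs Euo Ev ξ st e = some st' := SAASf_sub (fpol_sub_S h)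

theorem fpol_pol (qa : AtkState X Z E) (a : Option E)
    (h : (fpol δ Eobs Euo Ev ξ Xsec π (Sum.inr qa) (Sum.inr a)).isSome) : a = π qa := by
  simp only [fpol] at h
  split_ifs at h with h1
  · simpa using h1
  · simp at h

theorem fpol_SAS (hπ : GoodPol δ Eobs Euo Ev ξ Xsec π) :
    IsSAS δ Eobs Euo Ev ξ z0 X0 Xsec (fpol δ Eobs Euo Ev ξ Xsec π) := by
  refine ⟨fun st e st' h => fpol_sub_S h, ?_, fun qe _ e => rfl⟩
  rintro qa ⟨t, ht⟩
  rcases List.eq_nil_or_concat t with rfl | ⟨t, e, rfl⟩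
  · simp [runStr, AASq0] at ht
  rw [List.concat_eq_append, runStr_snoc] at ht
  obtain ⟨st, _, h2⟩ := Option.bind_eq_some_iff.1 ht
  obtain ⟨_, _, hO⟩ := AASf_to_inr (fpol_sub h2)
  refine ⟨Sum.inr (π qa), ?_, ?_⟩
  · simp only [fpol, if_true]
    exact hπ.1 qa hO.1.2
  · intro e' he'
    simp only [fpol] at he'
    split_ifs at he' with h1
    · exact h1
    · simp at he'

theorem Am_exists (f : MState X Z E → MEvent E → Option (MState X Z E))
    (hf : ∀ st e st', f st e = some st' → AASf δ Eobs Euo Ev ξ st e = some st')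
    (hπ : ∀ qa a, (f (Sum.inr qa) (Sum.inr a)).isSome → a = π qa) :
    ∃ Am : List E → Option E, Am [] = none ∧ ∀ α σ,
      ((∀ h, LeM f (AASq0 X0 z0) h → obs h ≠ α ++ [σ]) → Am (α ++ [σ]) = some σ) ∧
      (∀ h, LeM f (AASq0 X0 z0) h → obs h = α ++ [σ] →
        h.getLast? = some (Sum.inr (Am (α ++ [σ])))) := by
  have key : ∀ β : List E, ∃ b : Option E, (β = [] → b = none) ∧ ∀ α σ, β = α ++ [σ] →
      ((∀ h, LeM f (AASq0 X0 z0) h → obs h ≠ α ++ [σ]) → b = some σ) ∧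
      (∀ h, LeM f (AASq0 X0 z0) h → obs h = α ++ [σ] →
        h.getLast? = some (Sum.inr b)) := by
    intro β
    by_cases hb : ∃ h, LeM f (AASq0 X0 z0) h ∧ obs h = β
    · obtain ⟨h, hL, ho⟩ := hb
      rcases LeM_last hf hL with rfl | ⟨h', qa, a, rfl, -⟩
      · have : β = [] := by rw [← ho]; rfl
        subst this
        exact ⟨none, fun _ => rfl, fun α σ h => by simp at h⟩
      · refine ⟨a, fun h0 => ?_, ?_⟩
        · rw [obs_two, h0] at ho; simp at ho
        · rintro α σ rfl
          refine ⟨fun hn => absurd ho (hn _ hL), fun h2 hL2 ho2 => ?_⟩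
          rw [LeM_unique hf π hπ _ hL2 hL ho2 ho]
          simp
    · refine ⟨β.getLast?, fun h => by rw [h]; rfl, ?_⟩
      rintro α σ rfl
      exact ⟨fun _ => by simp, fun h hL ho => absurd ⟨h, hL, ho⟩ hb⟩
  choose Am h1 h2 using key
  exact ⟨Am, h1 [] rfl, fun α σ => h2 _ α σ rfl⟩

/-- Following a rank-minimizing policy from a winning state leads to detection. -/
theorem follow (hpart : ∀ e, e ∈ Euo ↔ e ∉ Eobs) (hv : Ev ⊆ Eobs) {S : List E → Set E}
    (hreal : Realizes ξ z0 δ Eobs S X0) (hπ : GoodPol δ Eobs Euo Ev ξ Xsec π)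
    {Am : List E → Option E}
    (hAm : ∀ α σ h, LeM (fpol δ Eobs Euo Ev ξ Xsec π) (AASq0 X0 z0) h → obs h = α ++ [σ] →
        h.getLast? = some (Sum.inr (Am (α ++ [σ]))))
    (n : ℕ) (β : List E) (h : List (MEvent E)) (e : EnvState X Z)
    (hC : Cons δ Eobs Euo ξ z0 S X0 Am β e)
    (hrun : runStr (fpol δ Eobs Euo Ev ξ Xsec π) (AASq0 X0 z0) h = some (Sum.inl e))
    (ho : obs h = β) (hW : Win δ Eobs Euo Ev ξ Xsec n e)
    (h0 : ¬ Win δ Eobs Euo Ev ξ Xsec 0 e) : ISDetectable δ Eobs S X0 Xsec Am := by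
  induction n using Nat.strong_induction_on generalizing β h e with
  | _ n ih =>
  cases n with
  | zero => exact absurd hW h0
  | succ n =>
  have hS := Win_SAASf hW h0
  obtain ⟨σ, a, e', ⟨q, qt, z, rfl, hO, hst⟩, hW'⟩ := hW
  obtain ⟨e'', m, hmn, hst'', hW''⟩ := hπ.2 _ _ _ _ hst hW'
  have hStep : Step δ Eobs Euo Ev ξ (q, qt, some z) σ (π (q, qt, z, σ)) e'' :=
    ⟨q, qt, z, rfl, hO, hst''⟩
  have hrun' : runStr (fpol δ Eobs Euo Ev ξ Xsec π) (AASq0 X0 z0)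
      (h ++ [Sum.inl σ, Sum.inr (π (q, qt, z, σ))]) = some (Sum.inl e'') := by
    have h1 : fpol δ Eobs Euo Ev ξ Xsec π (Sum.inl (q, qt, some z)) (Sum.inl σ) =
        some (Sum.inr (q, qt, z, σ)) := by
      simp only [fpol]; rw [hS]; simp [AASf, hO]
    have h2 : fpol δ Eobs Euo Ev ξ Xsec π (Sum.inr (q, qt, z, σ))
        (Sum.inr (π (q, qt, z, σ))) = some (Sum.inl e'') := by
      simp only [fpol, if_true]; exact hst''
    rw [runStr_append, hrun]
    simp [runStr, h1, h2]
  have ho' : obs (h ++ [Sum.inl σ, Sum.inr (π (q, qt, z, σ))]) = β ++ [σ] := by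
    rw [obs_two, ho]
  have hAmv : π (q, qt, z, σ) = Am (β ++ [σ]) := by
    have := hAm β σ _ ⟨_, hrun'⟩ ho'
    simpa using this
  by_cases hw0 : Win δ Eobs Euo Ev ξ Xsec 0 e''
  · obtain ⟨a1, a2, a3, a4⟩ := Cons_EI hpart hC hStep
    exact ⟨β, σ, a1, a2, a3, by rw [a4]; exact hw0.1⟩
  · have hs : e''.2.2.isSome := by
      cases m with
      | zero => exact absurd hW'' hw0
      | succ m =>
        obtain ⟨_, _, _, ⟨_, _, _, rfl, _⟩, _⟩ := hW''
        rfl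
    rw [hAmv] at hStep
    exact ih m (by omega) _ _ e'' (Cons_step hpart hv hreal hC hStep hs) hrun' ho' hW'' hw0

end

/-! ## STATEMENT 15 (Theorem 2) -/
theorem stmt15 [Fintype X] [Fintype E] [Fintype Z] (δ : X → E → Option X)
    (Eobs Euo Ev : Set E) (hpart : ∀ e, e ∈ Euo ↔ e ∉ Eobs) (hv : Ev ⊆ Eobs)
    (Euc : Set E) (S : List E → Set E) (hΓ : ∀ α, Euc ⊆ S α) (X0 : Set X)
    (ξ : Z → E → Option Z) (z0 : Z) (hreal : Realizes ξ z0 δ Eobs S X0)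
    (Xsec : Set X) (hsec : Xsec ⊆ X0) :
    (∃ A : List E → Option E, IsAttacker δ Eobs Ev X0 A ∧
        ISDetectable δ Eobs S X0 Xsec A) ↔
      (∃ fm : MState X Z E → MEvent E → Option (MState X Z E),
        ∃ Am : List E → Option E, IsSAS δ Eobs Euo Ev ξ z0 X0 Xsec fm ∧
          InducedStrategy δ Eobs X0 fm z0 Am ∧ ISDetectable δ Eobs S X0 Xsec Am) := by
  constructor
  · rintro ⟨A, hA, α, σ, hσ, hL, hE, hI⟩
    obtain ⟨π, hπ⟩ := exists_GoodPol δ Eobs Euo Ev ξ Xsec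
    obtain ⟨Am, hAm0, hAm⟩ := Am_exists (X0 := X0) (z0 := z0) (π := π)
      (fpol δ Eobs Euo Ev ξ Xsec π) (fun st e st' h => fpol_sub h) fpol_pol
    refine ⟨fpol δ Eobs Euo Ev ξ Xsec π, Am, fpol_SAS hπ, ⟨hAm0, fun α σ _ => hAm α σ⟩, ?_⟩
    have hX0 : X0.Nonempty := by
      obtain ⟨_, x0, h0, _⟩ := hE
      exact ⟨x0, h0⟩
    obtain ⟨n, hn⟩ := attack_Win hpart hv hreal hA α σ [] _ (Cons_nil hpart hreal hX0)
      (mem_projSet.1 hL) hE hI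
    have hC : Cons δ Eobs Euo ξ z0 S X0 Am [] (X0, augX0 X0, some z0) :=
      Cons_nil hpart hreal hX0
    by_cases h0 : Win δ Eobs Euo Ev ξ Xsec 0 (X0, augX0 X0, some z0)
    · obtain ⟨τ, a, e', hst, -⟩ := hn
      obtain ⟨a1, a2, a3, a4⟩ := Cons_EI hpart hC hst
      refine ⟨[], τ, a1, a2, a3, ?_⟩
      rintro x ⟨hx, -⟩
      exact h0.1 ⟨(x, x), ⟨hx, rfl⟩, rfl⟩
    · exact follow hpart hv hreal hπ (fun α σ => (hAm α σ).2) (n + 1) [] [] _ hC rfl rfl hn h0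
  · rintro ⟨fm, Am, hS, hI, hD⟩
    refine ⟨Am, ⟨hI.1, ?_⟩, hD⟩
    intro α σ hα
    have hV : Am (α ++ [σ]) ∈ Vmap Ev σ := by
      by_cases hex : ∃ h, LeM fm (AASq0 X0 z0) h ∧ obs h = α ++ [σ]
      · obtain ⟨h, hL, ho⟩ := hex
        have hl := (hI.2 α σ hα).2 h hL ho
        rcases LeM_last (fun st e st' h => SAASf_sub (hS.1 st e st' h)) hL with
          rfl | ⟨h', qa, a, rfl, ha, -⟩
        · simp at hl
        · rw [obs_two] at ho
          obtain ⟨_, p⟩ := List.append_inj' ho rfl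
          simp only [List.cons.injEq, and_true] at p
          have : a = Am (α ++ [σ]) := by simpa using hl
          rw [← this, ← p]
          exact ha
      · rw [(hI.2 α σ hα).1 fun h hL ho => hex ⟨h, hL, ho⟩]
        by_cases hσ : σ ∈ Ev <;> simp [Vmap, hσ]
    refine ⟨fun hσ => ?_, fun _ => hV⟩
    simpa [Vmap, hσ] using hV

end DES
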